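/- In B3, the word α' = σ2²σ1σ2⁻¹σ1⁻³σ2⁻¹σ1²σ2⁻²σ1⁻²σ2³σ1⁻¹σ2σ1⁻¹σ2² equals (σ2σ1⁻¹σ2σ1⁻¹σ2²)³·Δ3⁻², where Δ3 = σ1σ2σ1; in particular α' is a non-trivial element of B3. -/

import Mathlib

open FreeGroup

/-- The defining relation of the braid group `B₃`: `σ₁σ₂σ₁ = σ₂σ₁σ₂`. -/
def B3rels : Set (FreeGroup (Fin 2)) :=
  {of 0 * of 1 * of 0 * (of 1 * of 0 * of 1)⁻¹}

/-- The braid group on three strands. -/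
abbrev B3 := PresentedGroup B3rels

def σ₁ : B3 := PresentedGroup.of 0
def σ₂ : B3 := PresentedGroup.of 1

/-- The half-twist `Δ₃ = σ₁σ₂σ₁`. -/
def Δ₃ : B3 := σ₁ * σ₂ * σ₁

/-- The 3-braid `α' = σ₂²σ₁σ₂⁻¹σ₁⁻³σ₂⁻¹σ₁²σ₂⁻²σ₁⁻²σ₂³σ₁⁻¹σ₂σ₁⁻¹σ₂²` obtained by
forgetting the fourth strand of Cooper–Long's kernel element. -/
def α' : B3 :=
  σ₂ ^ 2 * σ₁ * σ₂⁻¹ * σ₁ ^ (-3 : ℤ) * σ₂⁻¹ * σ₁ ^ 2 * σ₂ ^ (-2 : ℤ) *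
    σ₁ ^ (-2 : ℤ) * σ₂ ^ 3 * σ₁⁻¹ * σ₂ * σ₁⁻¹ * σ₂ ^ 2

/-!
Put `w = σ₂σ₁⁻¹σ₂σ₁⁻¹σ₂²` and `u = σ₁⁻¹σ₂⁻³σ₁⁻²σ₂²`. The braid relation gives `w = Δ₃² u` and
`α' = w u w`; as `Δ₃²` is central, `w u w = w³ Δ₃⁻²`. Under the homomorphism `B₃ → SL(2, ℤ)` sending
`σ₁` and `σ₂` to the elementary matrices `T` and `S T S⁻¹`, the element `Δ₃²` becomes `-1`, whereas
`w` becomes hyperbolic (of trace `13`), so `w³ ≠ Δ₃²`.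
-/

/-- The braid relation `aba = bab`; by `B3.lift`, in a group it is the condition for `σ₁ ↦ a`,
`σ₂ ↦ b` to extend to a homomorphism from `B₃`. -/
def BraidRelation {M : Type*} [Mul M] (a b : M) : Prop :=
  a * b * a = b * a * b

/-- The half-twist word, whose value at `σ₁`, `σ₂` is `Δ₃`. -/
def halfTwist {M : Type*} [Mul M] (a b : M) : M :=
  a * b * a

/-- The word `ba⁻¹ba⁻¹b²`, a cube root of `alphaWord a b` up to the full twist `(aba)²`. -/
def alphaRoot {G : Type*} [Group G] (a b : G) : G :=
  b * a⁻¹ * b * a⁻¹ * b ^ 2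

/-- The word of which `α'` is the value at `σ₁`, `σ₂`. -/
def alphaWord {G : Type*} [Group G] (a b : G) : G :=
  b ^ 2 * a * b⁻¹ * a ^ (-3 : ℤ) * b⁻¹ * a ^ 2 * b ^ (-2 : ℤ) * a ^ (-2 : ℤ) * b ^ 3 * a⁻¹ * b *
    a⁻¹ * b ^ 2

namespace BraidRelation

section Monoid

variable {M : Type*} [Monoid M] {a b : M}

lemma symm (h : BraidRelation a b) : BraidRelation b a :=
  Eq.symm h

lemma semiconjBy_mul (h : BraidRelation a b) : SemiconjBy (a * b) a b := by
  rw [SemiconjBy, h, mul_assoc]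

lemma halfTwist_comm (h : BraidRelation a b) : halfTwist a b = halfTwist b a :=
  h

lemma semiconjBy_halfTwist (h : BraidRelation a b) : SemiconjBy (halfTwist a b) a b :=
  h.semiconjBy_mul.mul_left (Commute.refl a)

lemma commute_halfTwist_sq_left (h : BraidRelation a b) : Commute (halfTwist a b ^ 2) a := by
  have hba : SemiconjBy (halfTwist a b) b a := h.halfTwist_comm ▸ h.symm.semiconjBy_halfTwist
  rw [sq]
  exact hba.mul_left h.semiconjBy_halfTwist

lemma commute_halfTwist_sq_right (h : BraidRelation a b) : Commute (halfTwist a b ^ 2) b :=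
  h.halfTwist_comm ▸ h.symm.commute_halfTwist_sq_left

lemma halfTwist_sq_eq (h : BraidRelation a b) : halfTwist a b ^ 2 = b ^ 2 * a * b ^ 2 * a :=
  calc halfTwist a b ^ 2 = halfTwist b a * halfTwist a b := by rw [sq, ← h.halfTwist_comm]
    _ = b * halfTwist a b * (b * a) := by simp only [halfTwist, mul_assoc]
    _ = b * halfTwist b a * (b * a) := by rw [h.halfTwist_comm]
    _ = b ^ 2 * a * b ^ 2 * a := by simp only [halfTwist, sq, mul_assoc]

end Monoid

section Group

variable {G : Type*} [Group G] {a b : G}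

lemma inv_mul_zpow_mul (h : BraidRelation a b) (n : ℤ) :
    b⁻¹ * a ^ n * b = a * b ^ n * a⁻¹ := by
  have hn : b * a * b ^ n = a ^ n * (b * a) := h.symm.semiconjBy_mul.zpow_right n
  rw [eq_mul_inv_iff_mul_eq, mul_assoc, mul_assoc, inv_mul_eq_iff_eq_mul, ← hn, mul_assoc]

lemma inv_mul_mul (h : BraidRelation a b) : b⁻¹ * a * b = a * b * a⁻¹ := by
  simpa only [zpow_one] using h.inv_mul_zpow_mul 1

lemma commute_halfTwist_sq_alphaRoot (h : BraidRelation a b) :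
    Commute (halfTwist a b ^ 2) (alphaRoot a b) := by
  have ha : Commute (halfTwist a b ^ 2) a⁻¹ := h.commute_halfTwist_sq_left.inv_right
  have hb : Commute (halfTwist a b ^ 2) b := h.commute_halfTwist_sq_right
  exact (((hb.mul_right ha).mul_right hb).mul_right ha).mul_right (hb.pow_right 2)

lemma alphaRoot_eq_halfTwist_sq_mul (h : BraidRelation a b) :
    alphaRoot a b = halfTwist a b ^ 2 * (a⁻¹ * b ^ (-3 : ℤ) * a ^ (-2 : ℤ) * b ^ 2) :=
  calc alphaRoot a b
    _ = b * (a⁻¹ * b * a) * b ^ 3 * a * (a⁻¹ * b ^ (-3 : ℤ) * a ^ (-2 : ℤ) * b ^ 2) := by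
        rw [alphaRoot]
        group
    _ = b * (b * a * b⁻¹) * b ^ 3 * a * (a⁻¹ * b ^ (-3 : ℤ) * a ^ (-2 : ℤ) * b ^ 2) := by
        rw [h.symm.inv_mul_mul]
    _ = b ^ 2 * a * b ^ 2 * a * (a⁻¹ * b ^ (-3 : ℤ) * a ^ (-2 : ℤ) * b ^ 2) := by
        rw [sq b]
        group
    _ = halfTwist a b ^ 2 * (a⁻¹ * b ^ (-3 : ℤ) * a ^ (-2 : ℤ) * b ^ 2) := by
        rw [h.halfTwist_sq_eq]

lemma alphaWord_eq_alphaRoot_mul_mul_alphaRoot (h : BraidRelation a b) :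
    alphaWord a b =
      alphaRoot a b * (a⁻¹ * b ^ (-3 : ℤ) * a ^ (-2 : ℤ) * b ^ 2) * alphaRoot a b :=
  calc alphaWord a b
    _ = b * (b * a * b⁻¹) * a ^ (-3 : ℤ) * (b⁻¹ * a ^ (2 : ℤ) * b) *
          (b ^ (-3 : ℤ) * a ^ (-2 : ℤ) * b ^ 2) * alphaRoot a b := by
        rw [alphaWord, alphaRoot]
        nth_rewrite 1 [sq b]
        group
    _ = b * (a⁻¹ * b * a) * a ^ (-3 : ℤ) * (a * b ^ (2 : ℤ) * a⁻¹) *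
          (b ^ (-3 : ℤ) * a ^ (-2 : ℤ) * b ^ 2) * alphaRoot a b := by
        rw [h.symm.inv_mul_mul, h.inv_mul_zpow_mul]
    _ = alphaRoot a b * (a⁻¹ * b ^ (-3 : ℤ) * a ^ (-2 : ℤ) * b ^ 2) * alphaRoot a b := by
        rw [alphaRoot]
        group

theorem alphaWord_eq (h : BraidRelation a b) :
    alphaWord a b = alphaRoot a b ^ 3 * (halfTwist a b ^ 2)⁻¹ :=
  calc alphaWord a b
    _ = alphaRoot a b * ((halfTwist a b ^ 2)⁻¹ * alphaRoot a b) * alphaRoot a b := by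
        rw [h.alphaWord_eq_alphaRoot_mul_mul_alphaRoot,
          ← eq_inv_mul_of_mul_eq h.alphaRoot_eq_halfTwist_sq_mul.symm]
    _ = alphaRoot a b * ((halfTwist a b ^ 2)⁻¹ * alphaRoot a b ^ 2) := by
        rw [sq (alphaRoot a b), mul_assoc, mul_assoc]
    _ = alphaRoot a b * (alphaRoot a b ^ 2 * (halfTwist a b ^ 2)⁻¹) := by
        rw [(h.commute_halfTwist_sq_alphaRoot.inv_left.pow_right 2).eq]
    _ = alphaRoot a b ^ 3 * (halfTwist a b ^ 2)⁻¹ := by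
        rw [← mul_assoc, ← pow_succ']

end Group

end BraidRelation

namespace B3

lemma braidRelation_σ₁_σ₂ : BraidRelation σ₁ σ₂ :=
  mul_inv_eq_one.mp (PresentedGroup.one_of_mem (rels := B3rels) rfl)

section Lift

variable {G : Type*} [Group G] {a b : G}

lemma freeGroup_lift_eq_one (h : BraidRelation a b) :
    ∀ r ∈ B3rels, FreeGroup.lift ![a, b] r = 1 := by
  rintro _ rfl
  simp only [_root_.map_mul, _root_.map_inv, lift_apply_of]
  exact mul_inv_eq_one.mpr h

/-- The homomorphism from `B₃` with `σ₁ ↦ a` and `σ₂ ↦ b` given by the universal property. -/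
def lift (h : BraidRelation a b) : B3 →* G :=
  PresentedGroup.toGroup (freeGroup_lift_eq_one h)

lemma lift_σ₁ (h : BraidRelation a b) : lift h σ₁ = a :=
  PresentedGroup.toGroup.of (freeGroup_lift_eq_one h)

lemma lift_σ₂ (h : BraidRelation a b) : lift h σ₂ = b :=
  PresentedGroup.toGroup.of (freeGroup_lift_eq_one h)

lemma lift_Δ₃ (h : BraidRelation a b) : lift h Δ₃ = halfTwist a b := by
  simp only [Δ₃, halfTwist, _root_.map_mul, lift_σ₁, lift_σ₂]

lemma lift_alphaRoot (h : BraidRelation a b) : lift h (alphaRoot σ₁ σ₂) = alphaRoot a b := by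
  simp only [alphaRoot, _root_.map_mul, _root_.map_inv, _root_.map_pow, lift_σ₁, lift_σ₂]

end Lift

end B3

section SL2

open ModularGroup MatrixGroups

lemma braidRelation_T_S_mul_T_mul_S_inv : BraidRelation T (S * T * S⁻¹) := by
  rw [BraidRelation]
  decide

lemma halfTwist_T_sq : halfTwist T (S * T * S⁻¹) ^ 2 = -1 := by
  decide

lemma coe_alphaRoot_T :
    ((alphaRoot T (S * T * S⁻¹) : SL(2, ℤ)) : Matrix (Fin 2) (Fin 2) ℤ) =
      !![8, -3; -13, 5] := by
  decide

lemma alphaRoot_T_cube_ne_neg_one : alphaRoot T (S * T * S⁻¹) ^ 3 ≠ -1 := by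
  intro h
  have hM := congrArg Subtype.val h
  rw [Matrix.SpecialLinearGroup.coe_pow, coe_alphaRoot_T] at hM
  revert hM
  decide

end SL2

theorem alphaRoot_σ₁_σ₂_cube_ne_Δ₃_sq : alphaRoot σ₁ σ₂ ^ 3 ≠ Δ₃ ^ 2 := by
  intro h
  have hSL := congrArg (B3.lift braidRelation_T_S_mul_T_mul_S_inv) h
  rw [_root_.map_pow, _root_.map_pow, B3.lift_alphaRoot, B3.lift_Δ₃, halfTwist_T_sq] at hSL
  exact alphaRoot_T_cube_ne_neg_one hSL

/-- In `B₃`, `α' = (σ₂σ₁⁻¹σ₂σ₁⁻¹σ₂²)³ Δ₃⁻²`; in particular `α'` is non-trivial. -/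
theorem alpha'_eq_and_nontrivial :
    α' = (σ₂ * σ₁⁻¹ * σ₂ * σ₁⁻¹ * σ₂ ^ 2) ^ 3 * (Δ₃ ^ 2)⁻¹ ∧ α' ≠ 1 := by
  have h : α' = (σ₂ * σ₁⁻¹ * σ₂ * σ₁⁻¹ * σ₂ ^ 2) ^ 3 * (Δ₃ ^ 2)⁻¹ :=
    B3.braidRelation_σ₁_σ₂.alphaWord_eq
  refine ⟨h, ?_⟩
  rw [h, Ne, mul_inv_eq_one]
  exact alphaRoot_σ₁_σ₂_cube_ne_Δ₃_sq
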